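/- Let m ≥ 0 and d ≥ 1 be integers and let L = L_{2d}^{(m)} = 2U ⊕ mE8(−1) ⊕ ⟨−2d⟩. Let r ∈ L be a primitive vector with (r,r) = −2d and div(r) = d. Then the orthogonal complement K_r = {x ∈ L : (x,r) = 0}, with the restricted form, is isometric either to K_2^{(m)} = U ⊕ mE8(−1) ⊕ ⟨2⟩ ⊕ ⟨−2⟩ or to T_{2,8m+2} = U ⊕ U(2) ⊕ mE8(−1). -/

import Mathlib

/-- The hyperbolic plane `U`, with Gram matrix `[[0,1],[1,0]]`. -/
def gramU : Matrix (Fin 2) (Fin 2) ℤ := !![0, 1; 1, 0]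

/-- The Gram matrix of `E₈(−1)`: the negated Cartan (= Gram) matrix of the `E₈` root
lattice. -/
def gramE8neg : Matrix (Fin 8) (Fin 8) ℤ := -CartanMatrix.E₈

/-- The Gram matrix of `m` orthogonal copies of `E₈(−1)`. -/
def gramE8copies (m : ℕ) : Matrix (Fin m × Fin 8) (Fin m × Fin 8) ℤ :=
  Matrix.of fun p q => if p.1 = q.1 then gramE8neg p.2 q.2 else 0

/-- Index set for `II_{2,8m+2} = 2U ⊕ mE₈(−1)`. -/
abbrev IdxII (m : ℕ) : Type := (Fin 2 ⊕ Fin 2) ⊕ Fin m × Fin 8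

/-- The Gram matrix of the even unimodular lattice `II_{2,8m+2} = 2U ⊕ mE₈(−1)`. -/
def gramII (m : ℕ) : Matrix (IdxII m) (IdxII m) ℤ :=
  Matrix.fromBlocks (Matrix.fromBlocks gramU 0 0 gramU) 0 0 (gramE8copies m)

/-- Index set for `L_{2d}^{(m)} = 2U ⊕ mE₈(−1) ⊕ ⟨−2d⟩`. -/
abbrev IdxL (m : ℕ) : Type := IdxII m ⊕ Fin 1

/-- The Gram matrix of `L_{2d}^{(m)} = 2U ⊕ mE₈(−1) ⊕ ⟨−2d⟩`. -/
def gramL (m d : ℕ) : Matrix (IdxL m) (IdxL m) ℤ :=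
  Matrix.fromBlocks (gramII m) 0 0 !![-(2 * (d : ℤ))]

/-- The bilinear form on `ι → ℤ` associated to a Gram matrix `G`:
`⟨x, y⟩ = ∑ i j, x i * G i j * y j`. -/
def bilin {ι : Type} [Fintype ι] (G : Matrix ι ι ℤ) (x y : ι → ℤ) : ℤ :=
  ∑ i, ∑ j, x i * G i j * y j

/-- `r` is primitive: `ℚr ∩ L = ℤr`, equivalently `r` is not a nontrivial integer
multiple of a lattice vector. -/
def IsPrim {ι : Type} (r : ι → ℤ) : Prop :=
  ∀ (k : ℤ) (x : ι → ℤ), r = k • x → IsUnit k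

/-- `s = div(r)`: the positive generator of the ideal `{(r,l) : l ∈ L} ⊆ ℤ`. -/
def IsDivisorOf {ι : Type} [Fintype ι] (G : Matrix ι ι ℤ) (r : ι → ℤ) (s : ℤ) : Prop :=
  0 < s ∧ (∀ l : ι → ℤ, s ∣ bilin G r l) ∧ ∃ l : ι → ℤ, bilin G r l = s

/-- Two lattices, given as `ℤ`-modules with `ℤ`-valued bilinear forms, are isometric. -/
def LatIsometric {M N : Type} [AddCommGroup M] [Module ℤ M] [AddCommGroup N] [Module ℤ N]
    (BM : M → M → ℤ) (BN : N → N → ℤ) : Prop :=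
  ∃ e : M ≃ₗ[ℤ] N, ∀ x y : M, BN (e x) (e y) = BM x y

/-- The orthogonal complement `K_r = {x : (x,r) = 0}` of `r`, as a `ℤ`-submodule. -/
def orthC {ι : Type} [Fintype ι] (G : Matrix ι ι ℤ) (r : ι → ℤ) :
    Submodule ℤ (ι → ℤ) where
  carrier := {x | bilin G x r = 0}
  zero_mem' := by simp [bilin]
  add_mem' := by
    intro a b ha hb
    simp only [Set.mem_setOf_eq, bilin, Pi.add_apply, add_mul, Finset.sum_add_distrib] at *
    rw [ha, hb, add_zero]
  smul_mem' := by
    intro c x hx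
    simp only [Set.mem_setOf_eq, bilin, Pi.smul_apply, smul_eq_mul, mul_assoc,
      ← Finset.mul_sum] at *
    rw [hx, mul_zero]

/-- Index set for `K_2^{(m)} = U ⊕ mE₈(−1) ⊕ ⟨2⟩ ⊕ ⟨−2⟩`. -/
abbrev IdxK2 (m : ℕ) : Type := ((Fin 2 ⊕ Fin m × Fin 8) ⊕ Fin 1) ⊕ Fin 1

/-- The Gram matrix of `K_2^{(m)} = U ⊕ mE₈(−1) ⊕ ⟨2⟩ ⊕ ⟨−2⟩`. -/
def gramK2 (m : ℕ) : Matrix (IdxK2 m) (IdxK2 m) ℤ :=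
  Matrix.fromBlocks
    (Matrix.fromBlocks (Matrix.fromBlocks gramU 0 0 (gramE8copies m)) 0 0 !![(2 : ℤ)])
    0 0 !![(-2 : ℤ)]

/-- The Gram matrix of `U(2)`, i.e. `[[0,2],[2,0]]`. -/
def gramU2 : Matrix (Fin 2) (Fin 2) ℤ := !![0, 2; 2, 0]

/-- Index set for `T_{2,8m+2} = U ⊕ U(2) ⊕ mE₈(−1)`. -/
abbrev IdxT (m : ℕ) : Type := (Fin 2 ⊕ Fin 2) ⊕ Fin m × Fin 8

/-- The Gram matrix of `T_{2,8m+2} = U ⊕ U(2) ⊕ mE₈(−1)`. -/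
def gramT (m : ℕ) : Matrix (IdxT m) (IdxT m) ℤ :=
  Matrix.fromBlocks (Matrix.fromBlocks gramU 0 0 gramU2) 0 0 (gramE8copies m)

/-!
Write `L = M ⊕ ⟨−2d⟩` with `M = 2U ⊕ E` and `E` even unimodular. As `M` is unimodular, `div(r) = d`
forces `r = d w + c h`, where `w ∈ M` and `h` generates `⟨−2d⟩`. Eichler transvections of `M` carry
`w` to a multiple `b (a, 1)` of a primitive vector of the first hyperbolic plane, and then `b` is
prime to `2c`. The orthogonal complement of `r` is therefore `U ⊕ E` plus a binary lattice with
Gram matrix `2B`, `B = [[−a, c], [c, −d b²]]`. The condition `(r, r) = −2d` says `det B = −1`, so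
the form `B` is isotropic, and it is `U` or `⟨1⟩ ⊕ ⟨−1⟩` according to its parity.
-/

section Eichler

open QuadraticMap

variable {R : Type*} [CommRing R] {M : Type*} [AddCommGroup M] [Module R M]
  {N : Type*} [AddCommGroup N] [Module R N]

/-- A quadratic form is unimodular if a vector whose products with all vectors are divisible by
`b` is itself divisible by `b`. For a free module of finite rank over a principal ideal domain,
this says that the Gram determinant of the polar form is a unit; `b = 0` is nondegeneracy. -/
def IsUnimodular (q : QuadraticForm R M) : Prop :=
  ∀ (b : R) (v : M), (∀ y, b ∣ polar q y v) → ∃ v', v = b • v'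

/-- Two vectors lie in the same orbit of the orthogonal group of `q`. -/
def SameOrbit (q : QuadraticForm R M) (v w : M) : Prop :=
  ∃ g : q.IsometryEquiv q, g v = w

lemma SameOrbit.refl (q : QuadraticForm R M) (v : M) : SameOrbit q v v :=
  ⟨.refl q, rfl⟩

lemma SameOrbit.trans {q : QuadraticForm R M} {u v w : M} (huv : SameOrbit q u v)
    (hvw : SameOrbit q v w) : SameOrbit q u w := by
  obtain ⟨g, rfl⟩ := huv
  obtain ⟨h, rfl⟩ := hvw
  exact ⟨g.trans h, rfl⟩

lemma polar_isometryEquiv_apply {q : QuadraticForm R M} {q' : QuadraticForm R N}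
    (g : q.IsometryEquiv q') (x y : M) : polar q' (g x) (g y) = polar q x y := by
  simp only [polar, ← map_add, IsometryEquiv.map_app]

/-- The hyperbolic plane `U` as the quadratic form `(a, b) ↦ ab`. -/
def hyperbolicPlane (R : Type*) [CommRing R] : QuadraticForm R (R × R) :=
  linMulLin (LinearMap.fst R R R) (LinearMap.snd R R R)

lemma hyperbolicPlane_apply (x : R × R) : hyperbolicPlane R x = x.1 * x.2 := rfl

lemma polar_hyperbolicPlane (x y : R × R) :
    polar (hyperbolicPlane R) x y = x.1 * y.2 + x.2 * y.1 := by
  simp only [polar, hyperbolicPlane_apply, Prod.fst_add, Prod.snd_add]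
  ring

lemma isUnimodular_hyperbolicPlane : IsUnimodular (hyperbolicPlane R) := by
  rintro b ⟨x, y⟩ h
  obtain ⟨y', rfl⟩ : b ∣ y := by simpa [polar_hyperbolicPlane] using h (1, 0)
  obtain ⟨x', rfl⟩ : b ∣ x := by simpa [polar_hyperbolicPlane] using h (0, 1)
  exact ⟨(x', y'), rfl⟩

lemma IsUnimodular.prod {q : QuadraticForm R M} {q' : QuadraticForm R N} (hq : IsUnimodular q)
    (hq' : IsUnimodular q') : IsUnimodular (q.prod q') := by
  rintro b ⟨v, w⟩ h
  obtain ⟨v', rfl⟩ := hq b v fun y => by simpa using h (y, 0)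
  obtain ⟨w', rfl⟩ := hq' b w fun y => by simpa using h (0, y)
  exact ⟨(v', w'), rfl⟩

/-- The Eichler transvection of `U ⊕ M` attached to the first isotropic basis vector of `U` and
to a vector `y` of `M`. -/
def eichlerTransvection (q : QuadraticForm R M) (y : M) :
    ((hyperbolicPlane R).prod q).IsometryEquiv ((hyperbolicPlane R).prod q) where
  toFun w := ((w.1.1 - polar q y w.2 - q y * w.1.2, w.1.2), w.2 + w.1.2 • y)
  invFun w := ((w.1.1 + polar q y w.2 - q y * w.1.2, w.1.2), w.2 - w.1.2 • y)
  left_inv := by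
    rintro ⟨⟨a, b⟩, v⟩
    simp only [polar_add_right, polar_smul_right, polar_self, Prod.mk.injEq, smul_eq_mul,
      nsmul_eq_mul, Nat.cast_ofNat, and_true]
    exact ⟨by ring, by abel⟩
  right_inv := by
    rintro ⟨⟨a, b⟩, v⟩
    simp only [polar_sub_right, polar_smul_right, polar_self, Prod.mk.injEq, smul_eq_mul,
      nsmul_eq_mul, Nat.cast_ofNat, and_true]
    exact ⟨by ring, by abel⟩
  map_add' := by
    rintro ⟨⟨a, b⟩, v⟩ ⟨⟨a', b'⟩, v'⟩
    simp only [Prod.mk_add_mk, polar_add_right, add_smul, Prod.mk.injEq, and_true]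
    exact ⟨by ring, by abel⟩
  map_smul' := by
    rintro t ⟨⟨a, b⟩, v⟩
    simp only [Prod.smul_mk, polar_smul_right, smul_add, smul_eq_mul, mul_smul, Prod.mk.injEq,
      RingHom.id_apply, and_true]
    ring
  map_app' := by
    rintro ⟨⟨a, b⟩, v⟩
    have hq : q (v + b • y) = q v + b * b * q y + b * polar q y v := by
      rw [QuadraticMap.map_add q, QuadraticMap.map_smul, polar_smul_right, polar_comm]
      simp only [smul_eq_mul]
    simp only [prod_apply, hyperbolicPlane_apply, hq]
    ring

lemma sameOrbit_eichlerTransvection (q : QuadraticForm R M) (y : M) (a b : R) (v : M) :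
    SameOrbit ((hyperbolicPlane R).prod q) ((a, b), v)
      ((a - polar q y v - q y * b, b), v + b • y) :=
  ⟨eichlerTransvection q y, rfl⟩

/-- The isometry of `U` exchanging its two isotropic basis vectors. -/
def hyperbolicPlaneSwap : (hyperbolicPlane R).IsometryEquiv (hyperbolicPlane R) where
  toLinearEquiv := LinearEquiv.prodComm R R R
  map_app' x := mul_comm x.2 x.1

lemma sameOrbit_swap (q : QuadraticForm R M) (a b : R) (v : M) :
    SameOrbit ((hyperbolicPlane R).prod q) ((a, b), v) ((b, a), v) :=
  ⟨hyperbolicPlaneSwap.prod (.refl q), rfl⟩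

/-- The isometry of `q ⊕ q ⊕ q'` exchanging the first two summands. -/
def exchangeIsometry (q : QuadraticForm R M) (q' : QuadraticForm R N) :
    (q.prod (q.prod q')).IsometryEquiv (q.prod (q.prod q')) where
  toFun w := (w.2.1, w.1, w.2.2)
  invFun w := (w.2.1, w.1, w.2.2)
  map_add' _ _ := rfl
  map_smul' _ _ := rfl
  left_inv _ := rfl
  right_inv _ := rfl
  map_app' w := add_left_comm (q w.2.1) (q w.1) (q' w.2.2)

lemma sameOrbit_exchange (q : QuadraticForm R M) (q' : QuadraticForm R N) (x y : M) (v : N) :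
    SameOrbit (q.prod (q.prod q')) (x, y, v) (y, x, v) :=
  ⟨exchangeIsometry q q', rfl⟩

end Eichler

section EichlerNormalForm

open QuadraticMap

variable {R : Type*} [EuclideanDomain R] {M : Type*} [AddCommGroup M] [Module R M]
  {q : QuadraticForm R M}

/-- A vector of `U ⊕ M` with second coordinate `b` is reduced if no vector of its orbit under the
orthogonal group has a nonzero remainder modulo `b` as its second coordinate. It is the terminal
state of Euclid's algorithm on the orbit. -/
def IsEichlerReduced (q : QuadraticForm R M) (u : (R × R) × M) : Prop :=
  ∀ u', SameOrbit ((hyperbolicPlane R).prod q) u u' → ∀ x, u'.1.2 = x % u.1.2 → u.1.2 ∣ x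

lemma exists_sameOrbit_isEichlerReduced (q : QuadraticForm R M) (w : (R × R) × M) :
    ∃ u, SameOrbit ((hyperbolicPlane R).prod q) w u ∧ IsEichlerReduced q u := by
  let pivots : Set R := {b | b ≠ 0 ∧ ∃ u, SameOrbit ((hyperbolicPlane R).prod q) w u ∧ u.1.2 = b}
  rcases pivots.eq_empty_or_nonempty with hempty | hne
  · have hzero : ∀ u, SameOrbit ((hyperbolicPlane R).prod q) w u → u.1.2 = 0 := fun u hu => by
      by_contra h
      exact hempty.subset (show u.1.2 ∈ pivots from ⟨h, u, hu, rfl⟩)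
    refine ⟨w, .refl _ w, fun u hu x hx => ?_⟩
    rw [hzero w (.refl _ w), hzero u hu, EuclideanDomain.mod_zero] at hx
    exact hx ▸ dvd_zero _
  · obtain ⟨b, ⟨hb, u, hu, rfl⟩, hmin⟩ := EuclideanDomain.r_wellFounded.has_min pivots hne
    refine ⟨u, hu, fun u' hu' x hx => ?_⟩
    by_contra hdvd
    have hmod : x % u.1.2 ≠ 0 := fun h => hdvd (EuclideanDomain.mod_eq_zero.mp h)
    exact hmin _ ⟨hmod, u', hu.trans hu', hx⟩ (EuclideanDomain.mod_lt x hb)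

lemma IsEichlerReduced.exists_sameOrbit_zero {a b c e : R} {v : M}
    (h : IsEichlerReduced ((hyperbolicPlane R).prod q) ((a, b), (c, e), v)) :
    ∃ a', SameOrbit ((hyperbolicPlane R).prod ((hyperbolicPlane R).prod q))
      ((a, b), (c, e), v) ((a', b), 0, v) := by
  have hmod (x : R) : x + b * -(x / b) = x % b := by
    rw [EuclideanDomain.mod_eq_sub_mul_div]
    ring
  have hshift := sameOrbit_eichlerTransvection ((hyperbolicPlane R).prod q)
    ((-(c / b), -(e / b)), 0) a b ((c, e), v)
  simp only [Prod.smul_mk, Prod.mk_add_mk, smul_eq_mul, smul_zero, add_zero, hmod] at hshift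
  have hexch := hshift.trans (sameOrbit_exchange _ _ _ _ _)
  have he : b ∣ e := h _ hexch e rfl
  have hc : b ∣ c := h _ (hexch.trans (sameOrbit_swap _ _ _ _)) c rfl
  rw [EuclideanDomain.mod_eq_zero.mpr he, EuclideanDomain.mod_eq_zero.mpr hc] at hshift
  exact ⟨_, hshift⟩

lemma IsEichlerReduced.dvd_of_sameOrbit {u : (R × R) × (R × R) × M} {a b : R} {v : M}
    (h : IsEichlerReduced ((hyperbolicPlane R).prod q) u) (hb : u.1.2 = b)
    (horbit : SameOrbit ((hyperbolicPlane R).prod ((hyperbolicPlane R).prod q)) u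
      ((a, b), 0, v)) : b ∣ a := by
  subst hb
  refine h _ ((horbit.trans (sameOrbit_eichlerTransvection ((hyperbolicPlane R).prod q)
    ((a / u.1.2, 1), 0) _ _ _)).trans (sameOrbit_swap _ _ _ _)) a ?_
  rw [EuclideanDomain.mod_eq_sub_mul_div]
  simp [hyperbolicPlane_apply, mul_comm]

-- Euclid's algorithm by isometries: transvections subtract multiples of the coordinate `b` from
-- the others, and a `b` that can no longer be made smaller divides everything.
theorem IsUnimodular.exists_sameOrbit_smul (hq : IsUnimodular q) (w : (R × R) × (R × R) × M) :
    ∃ a b : R, SameOrbit ((hyperbolicPlane R).prod ((hyperbolicPlane R).prod q)) w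
      (b • ((a, 1), 0)) := by
  obtain ⟨⟨⟨a₀, b⟩, ⟨c, e⟩, v⟩, hwu, hred⟩ :=
    exists_sameOrbit_isEichlerReduced ((hyperbolicPlane R).prod q) w
  obtain ⟨a, horbit⟩ := hred.exists_sameOrbit_zero
  have htransvection (y : M) :
      SameOrbit ((hyperbolicPlane R).prod ((hyperbolicPlane R).prod q)) ((a₀, b), (c, e), v)
        ((a - polar q y v - q y * b, b), 0, v + b • y) := by
    simpa [polar_hyperbolicPlane, hyperbolicPlane_apply] using
      horbit.trans (sameOrbit_eichlerTransvection ((hyperbolicPlane R).prod q) (0, y) a b (0, v))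
  have hdvd (y : M) : b ∣ polar q y v := by
    have hshift : b ∣ a - polar q y v - q y * b := hred.dvd_of_sameOrbit rfl (htransvection y)
    have hpolar : b ∣ a - polar q y v := (dvd_sub_left (dvd_mul_left b (q y))).mp hshift
    exact (dvd_sub_right (hred.dvd_of_sameOrbit rfl horbit)).mp hpolar
  obtain ⟨v', rfl⟩ := hq b v hdvd
  have hclear := htransvection (-v')
  generalize a - polar q (-v') (b • v') - q (-v') * b = a' at hclear
  rw [smul_neg, add_neg_cancel] at hclear
  obtain ⟨k, hk⟩ := hred.dvd_of_sameOrbit rfl hclear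
  refine ⟨k, b, hwu.trans ?_⟩
  rwa [hk, show ((b * k, b), 0, 0) = b • ((k, (1 : R)), (0 : (R × R) × M)) by simp] at hclear

end EichlerNormalForm

section Isometry

open QuadraticMap Matrix

/-- The form of the orthogonal direct sum of two lattices. -/
def orthSum {M N : Type} (BM : M → M → ℤ) (BN : N → N → ℤ) (x y : M × N) : ℤ :=
  BM x.1 y.1 + BN x.2 y.2

/-- The form of the rank one lattice `⟨k⟩`. -/
def rankOneForm (k x y : ℤ) : ℤ := k * x * y

variable {M M' N N' P : Type} [AddCommGroup M] [AddCommGroup M'] [AddCommGroup N]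
  [AddCommGroup N'] [AddCommGroup P] {BM : M → M → ℤ} {BM' : M' → M' → ℤ} {BN : N → N → ℤ}
  {BN' : N' → N' → ℤ} {BP : P → P → ℤ}

namespace LatIsometric

lemma of_addEquiv [Module ℤ M] [Module ℤ N] (e : M ≃+ N) (he : ∀ x y, BN (e x) (e y) = BM x y) :
    LatIsometric BM BN :=
  ⟨{ e with map_smul' := fun n x => by simpa using map_intCast_smul e ℤ ℤ n x }, he⟩

lemma orthSum_comm (BM : M → M → ℤ) (BN : N → N → ℤ) :
    LatIsometric (orthSum BM BN) (orthSum BN BM) :=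
  of_addEquiv .prodComm fun _ _ => add_comm _ _

lemma orthSum_assoc (BM : M → M → ℤ) (BN : N → N → ℤ) (BP : P → P → ℤ) :
    LatIsometric (orthSum (orthSum BM BN) BP) (orthSum BM (orthSum BN BP)) :=
  of_addEquiv .prodAssoc fun _ _ => (add_assoc _ _ _).symm

variable [Module ℤ M] [Module ℤ M'] [Module ℤ N] [Module ℤ N'] [Module ℤ P]

lemma refl (BM : M → M → ℤ) : LatIsometric BM BM := ⟨.refl ℤ M, fun _ _ => rfl⟩

lemma symm (h : LatIsometric BM BN) : LatIsometric BN BM := by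
  obtain ⟨e, he⟩ := h
  exact ⟨e.symm, fun x y => by rw [← he, e.apply_symm_apply, e.apply_symm_apply]⟩

lemma trans (h : LatIsometric BM BN) (h' : LatIsometric BN BP) : LatIsometric BM BP := by
  obtain ⟨e, he⟩ := h
  obtain ⟨e', he'⟩ := h'
  exact ⟨e.trans e', fun x y => (he' _ _).trans (he x y)⟩

lemma orthSum_congr (h : LatIsometric BM BM') (h' : LatIsometric BN BN') :
    LatIsometric (orthSum BM BN) (orthSum BM' BN') := by
  obtain ⟨e, he⟩ := h
  obtain ⟨e', he'⟩ := h'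
  exact of_addEquiv (e.toAddEquiv.prodCongr e'.toAddEquiv) fun x y =>
    congrArg₂ (· + ·) (he _ _) (he' _ _)

lemma polar_prod (q : QuadraticForm ℤ M) (q' : QuadraticForm ℤ N) :
    LatIsometric (polar (q.prod q')) (orthSum (polar q) (polar q')) :=
  ⟨.refl ℤ _, fun x y => by simp [orthSum]⟩

lemma bilin_fromBlocks {ι κ : Type} [Fintype ι] [Fintype κ] (A : Matrix ι ι ℤ)
    (B : Matrix κ κ ℤ) :
    LatIsometric (bilin (fromBlocks A 0 0 B)) (orthSum (bilin A) (bilin B)) :=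
  ⟨.sumArrowLequivProdArrow ι κ ℤ ℤ, fun x y => by
    simp [orthSum, bilin, Fintype.sum_sum_type, LinearEquiv.sumArrowLequivProdArrow]⟩

lemma bilin_gramU : LatIsometric (bilin gramU) (polar (hyperbolicPlane ℤ)) :=
  ⟨.finTwoArrow ℤ ℤ, fun x y => by
    simp [bilin, gramU, polar_hyperbolicPlane, LinearEquiv.finTwoArrow]⟩

lemma orthSum_gramU {q : QuadraticForm ℤ N} (h : LatIsometric BM (polar q)) :
    LatIsometric (orthSum (bilin gramU) BM) (polar ((hyperbolicPlane ℤ).prod q)) :=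
  (orthSum_congr bilin_gramU h).trans (polar_prod _ q).symm

lemma bilin_diagonal (k l : ℤ) :
    LatIsometric (bilin !![k, 0; 0, l]) (orthSum (rankOneForm k) (rankOneForm l)) :=
  of_addEquiv (LinearEquiv.finTwoArrow ℤ ℤ).toAddEquiv fun x y => by
    simp [bilin, orthSum, rankOneForm, LinearEquiv.finTwoArrow, mul_comm k, mul_comm l]

lemma bilin_rankOne (k : ℤ) : LatIsometric (bilin !![k]) (rankOneForm k) :=
  ⟨.funUnique (Fin 1) ℤ ℤ, fun x y => by simp [bilin, rankOneForm, mul_comm k]⟩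

lemma bilin_smul {ι κ : Type} [Fintype ι] [Fintype κ] {A : Matrix ι ι ℤ} {B : Matrix κ κ ℤ}
    (h : LatIsometric (bilin A) (bilin B)) (k : ℤ) :
    LatIsometric (bilin (k • A)) (bilin (k • B)) := by
  obtain ⟨e, he⟩ := h
  refine ⟨e, fun x y => ?_⟩
  have hsmul {ι : Type} [Fintype ι] (G : Matrix ι ι ℤ) (x y : ι → ℤ) :
      bilin (k • G) x y = k * bilin G x y := by
    simp only [bilin, Finset.mul_sum, Matrix.smul_apply, smul_eq_mul, mul_left_comm, mul_assoc]
  rw [hsmul, hsmul, he]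

end LatIsometric

end Isometry

section GramMatrix

open QuadraticMap Matrix

lemma exists_polar_eq_of_even {R M : Type*} [CommRing R] [IsDomain R] [NeZero (2 : R)]
    [AddCommGroup M] [Module R M] {B : LinearMap.BilinForm R M} (hsymm : B.IsSymm)
    (heven : ∀ x, Even (B x x)) : ∃ q : QuadraticForm R M, ∀ x y, polar q x y = B x y := by
  choose q hq using heven
  have hpolar (x y : M) : polar q x y = B x y := by
    have hxy := hq (x + y)
    simp only [map_add, LinearMap.add_apply, hq x, hq y, hsymm.eq y x] at hxy
    refine mul_left_cancel₀ (two_ne_zero (α := R)) ?_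
    rw [polar]
    linear_combination -hxy
  refine ⟨.ofPolar q (fun a x => ?_) (by simp [hpolar]) (by simp [hpolar]), hpolar⟩
  have hax := hq (a • x)
  simp only [map_smul, LinearMap.smul_apply, smul_eq_mul, hq x] at hax
  refine mul_left_cancel₀ (two_ne_zero (α := R)) ?_
  rw [smul_eq_mul]
  linear_combination -hax

variable {ι : Type} [Fintype ι]

lemma bilin_eq_dotProduct_mulVec (G : Matrix ι ι ℤ) (x y : ι → ℤ) :
    bilin G x y = x ⬝ᵥ G *ᵥ y := by
  simp only [bilin, dotProduct, mulVec, Finset.mul_sum, mul_assoc]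

lemma even_bilin_self {A : Matrix ι ι ℤ} (hsymm : A.IsSymm) (heven : ∀ i, Even (A i i))
    (x : ι → ℤ) : Even (bilin A x x) := by
  classical
  have hB : (toBilin' A).IsSymm := isSymm_toBilin'_iff_isSymm.mpr hsymm
  rw [bilin, ← toBilin'_apply]
  induction (Pi.basisFun ℤ ι).mem_span x using Submodule.span_induction with
  | mem x hx =>
    obtain ⟨i, rfl⟩ := hx
    simpa using heven i
  | zero => simp
  | add x y _ _ hx hy =>
    have hexpand : toBilin' A (x + y) (x + y) =
        toBilin' A x x + toBilin' A y y + 2 * toBilin' A x y := by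
      simp only [map_add, LinearMap.add_apply, hB.eq y x]
      ring
    rw [hexpand]
    exact (hx.add hy).add (even_two_mul _)
  | smul k x _ hx =>
    simp only [map_smul, LinearMap.smul_apply, smul_eq_mul]
    exact (hx.mul_left k).mul_left k

variable [DecidableEq ι]

lemma latIsometric_transpose_mul_mul (B : Matrix ι ι ℤ) {P : Matrix ι ι ℤ} (hP : IsUnit P.det) :
    LatIsometric (bilin (Pᵀ * B * P)) (bilin B) := by
  refine ⟨P.toLinearEquiv' (P.invertibleOfIsUnitDet hP), fun x y => ?_⟩
  change bilin B (P *ᵥ x) (P *ᵥ y) = _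
  simp only [bilin_eq_dotProduct_mulVec, dotProduct_mulVec, vecMul_vecMul, vecMul_mulVec]

lemma isUnimodular_of_polar_eq_bilin {A : Matrix ι ι ℤ} (hdet : IsUnit A.det)
    {q : QuadraticForm ℤ (ι → ℤ)} (hq : ∀ x y, polar q x y = bilin A x y) : IsUnimodular q := by
  intro b v h
  have hdvd (i : ι) : b ∣ (A *ᵥ v) i := by
    simpa [hq, bilin_eq_dotProduct_mulVec] using h (Pi.single i 1)
  choose u hu using hdvd
  refine ⟨A⁻¹ *ᵥ u, ?_⟩
  rw [← mulVec_smul, ← show A *ᵥ v = b • u from funext hu, mulVec_mulVec, nonsing_inv_mul A hdet,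
    one_mulVec]

end GramMatrix

section BinaryForm

open Matrix MatrixGroups

lemma exists_isCoprime_isotropic {α β γ k : ℤ} (h : α * γ - β ^ 2 = -k ^ 2) :
    ∃ p s : ℤ, IsCoprime p s ∧ α * p ^ 2 + 2 * β * p * s + γ * s ^ 2 = 0 := by
  rcases eq_or_ne α 0 with rfl | hα
  · exact ⟨1, 0, isCoprime_one_left, by ring⟩
  -- `(k − β) / α` is the root given by the quadratic formula.
  · obtain ⟨g, p, s, hg, hcop, hp, hs⟩ :=
      Int.exists_gcd_one' (Int.gcd_pos_of_ne_zero_right (k - β) hα)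
    refine ⟨p, s, Int.isCoprime_iff_gcd_eq_one.mpr hcop, ?_⟩
    refine (mul_eq_zero.mp ?_).resolve_left (pow_ne_zero 2 (Int.natCast_ne_zero.mpr hg.ne'))
    calc (g : ℤ) ^ 2 * (α * p ^ 2 + 2 * β * p * s + γ * s ^ 2)
        = α * (p * g) ^ 2 + 2 * β * (p * g) * (s * g) + γ * (s * g) ^ 2 := by ring
      _ = α * (k - β) ^ 2 + 2 * β * (k - β) * α + γ * α ^ 2 := by rw [← hp, ← hs]
      _ = 0 := by linear_combination α * h

lemma exists_latIsometric_isotropic {B : Matrix (Fin 2) (Fin 2) ℤ} (hsymm : B.IsSymm)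
    (hdet : B.det = -1) :
    ∃ β γ : ℤ, β ^ 2 = 1 ∧ LatIsometric (bilin B) (bilin !![0, β; β, γ]) := by
  have hoff : B 1 0 = B 0 1 := hsymm.apply 0 1
  have hdet' : B 0 0 * B 1 1 - B 0 1 ^ 2 = -1 ^ 2 := by
    rw [det_fin_two, hoff] at hdet
    linear_combination hdet
  obtain ⟨p, s, hcop, hiso⟩ := exists_isCoprime_isotropic hdet'
  obtain ⟨g, hp, hs⟩ := hcop.exists_SL2_col 0
  let B' : Matrix (Fin 2) (Fin 2) ℤ := (g : Matrix (Fin 2) (Fin 2) ℤ)ᵀ * B * g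
  have hsymm' : B'.IsSymm := by simp [B', IsSymm, transpose_mul, hsymm.eq, Matrix.mul_assoc]
  have hiso' : B' 0 0 = 0 := by
    simp only [B', mul_apply, transpose_apply, Fin.sum_univ_two, hp, hs, hoff]
    linear_combination hiso
  have hB' : B' = !![0, B' 0 1; B' 0 1, B' 1 1] := by
    conv_lhs => rw [eta_fin_two B', hiso', hsymm'.apply 0 1]
  refine ⟨B' 0 1, B' 1 1, ?_, ?_⟩
  · have : B'.det = -1 := by simp [B', hdet]
    rw [hB', det_fin_two_of] at this
    linear_combination -this
  · rw [← hB']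
    exact (latIsometric_transpose_mul_mul B (by simp)).symm

lemma latIsometric_gramU_or_diagonal {B : Matrix (Fin 2) (Fin 2) ℤ} (hsymm : B.IsSymm)
    (hdet : B.det = -1) :
    LatIsometric (bilin B) (bilin gramU) ∨ LatIsometric (bilin B) (bilin !![1, 0; 0, -1]) := by
  obtain ⟨β, γ, hβ, hB⟩ := exists_latIsometric_isotropic hsymm hdet
  have hchange {p p' s s' : ℤ} {B' : Matrix (Fin 2) (Fin 2) ℤ} (hP : p * s' - p' * s = β)
      (hB' : !![p, s; p', s'] * !![0, β; β, γ] * !![p, p'; s, s'] = B') :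
      LatIsometric (bilin B) (bilin B') := by
    have htranspose : !![p, s; p', s'] = !![p, p'; s, s']ᵀ := (eta_fin_two !![p, p'; s, s']ᵀ).symm
    have hunit : IsUnit (!![p, p'; s, s'].det) := by
      rw [det_fin_two_of, hP]
      exact .of_mul_eq_one β (by rw [← sq, hβ])
    rw [htranspose] at hB'
    exact hB.trans (hB' ▸ latIsometric_transpose_mul_mul _ hunit).symm
  -- In a basis `e, f` with Gram matrix `[[0, β], [β, γ]]`, put `v = βf − ke`. Then `e, v` has Gram
  -- matrix `U` if `γ = 2k`, and `v, v − e` is orthogonal with squares `1, −1` if `γ = 2k + 1`.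
  obtain ⟨k, rfl | rfl⟩ := Int.even_or_odd' γ
  · refine .inl (hchange (p := 1) (p' := -k) (s := 0) (s' := β) (by ring) ?_)
    rw [mul_fin_two, mul_fin_two, gramU]
    grind
  · refine .inr (hchange (p := -k) (p' := -k - 1) (s := β) (s' := β) (by ring) ?_)
    rw [mul_fin_two, mul_fin_two]
    grind

end BinaryForm

section Complement

open QuadraticMap Matrix

lemma latIsometric_orthC {ι : Type} [Fintype ι] {G : Matrix ι ι ℤ} {r : ι → ℤ} {M N : Type}
    [AddCommGroup M] [AddCommGroup N] [Module ℤ N] {BM : M → M → ℤ} {BN : N → N → ℤ}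
    (e : (ι → ℤ) ≃+ M) (he : ∀ x y, BM (e x) (e y) = bilin G x y) (f : N →+ M)
    (hinj : Function.Injective f) (hrange : ∀ x, BM x (e r) = 0 ↔ x ∈ f.range)
    (hf : ∀ x y, BM (f x) (f y) = BN x y) :
    LatIsometric (fun x y : ↥(orthC G r) => bilin G (x : ι → ℤ) (y : ι → ℤ)) BN := by
  have hmem (n : N) : e.symm (f n) ∈ orthC G r := by
    change bilin G _ _ = 0
    rw [← he, e.apply_symm_apply, hrange]
    exact ⟨n, rfl⟩
  let φ : N →+ orthC G r := (e.symm.toAddMonoidHom.comp f).codRestrict (orthC G r) hmem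
  have hbij : Function.Bijective φ := by
    refine ⟨fun x y h => hinj (e.symm.injective (congrArg Subtype.val h)), fun ⟨x, hx⟩ => ?_⟩
    obtain ⟨n, hn⟩ := (hrange (e x)).mp ((he x r).trans hx)
    exact ⟨n, Subtype.ext (e.symm_apply_eq.mpr hn)⟩
  refine .symm (.of_addEquiv (AddEquiv.ofBijective φ hbij) fun x y => ?_)
  change bilin G (e.symm (f x)) (e.symm (f y)) = BN x y
  rw [← he, e.apply_symm_apply, e.apply_symm_apply, hf]

variable {E : Type} [AddCommGroup E]

/-- The parametrisation by `ℤ² ⊕ E` of the orthogonal complement of `(db(a, 1), 0, c)` in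
`U ⊕ E ⊕ ⟨−2d⟩`, which is cut out by `b(x₁ + a x₂) = 2cz`. It is onto when `b` is nonzero and
prime to `2c`, since then `b` divides `z`. -/
def complementMap (E : Type) [AddCommGroup E] (a b c : ℤ) :
    (Fin 2 → ℤ) × E →+ ((ℤ × ℤ) × E) × ℤ where
  toFun x := (((2 * c * x.1 1 - a * x.1 0, x.1 0), x.2), b * x.1 1)
  map_zero' := by simp
  map_add' x y := by
    simp only [Prod.fst_add, Prod.snd_add, Pi.add_apply, Prod.mk_add_mk, Prod.mk.injEq, and_true]
    exact ⟨by ring, by ring⟩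

lemma complementMap_injective {a b c : ℤ} (hb : b ≠ 0) :
    Function.Injective (complementMap E a b c) := by
  rintro ⟨x, n⟩ ⟨x', n'⟩ h
  obtain ⟨⟨⟨-, h0⟩, rfl⟩, h1⟩ : (((_ = _) ∧ x 0 = x' 0) ∧ n = n') ∧ b * x 1 = b * x' 1 := by
    simpa only [complementMap, AddMonoidHom.coe_mk, ZeroHom.coe_mk, Prod.mk.injEq] using h
  exact Prod.ext (funext (Fin.forall_fin_two.mpr ⟨h0, mul_left_cancel₀ hb h1⟩)) rfl

lemma mem_range_complementMap {a b c : ℤ} (hb : b ≠ 0) (hcop : IsCoprime b (2 * c))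
    (x : ((ℤ × ℤ) × E) × ℤ) :
    x ∈ (complementMap E a b c).range ↔ b * (x.1.1.1 + a * x.1.1.2) = 2 * c * x.2 := by
  constructor
  · rintro ⟨y, rfl⟩
    simp only [complementMap, AddMonoidHom.coe_mk, ZeroHom.coe_mk]
    ring
  · obtain ⟨⟨⟨x₁, x₂⟩, n⟩, z⟩ := x
    intro (h : b * (x₁ + a * x₂) = 2 * c * z)
    obtain ⟨z', rfl⟩ := hcop.dvd_of_dvd_mul_left ⟨_, h.symm⟩
    have hx₁ : x₁ = 2 * c * z' - a * x₂ := mul_left_cancel₀ hb (by linear_combination h)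
    exact ⟨(![x₂, z'], n), by simp [complementMap, hx₁]⟩

lemma orthSum_complementMap (q : QuadraticForm ℤ E) (a b c d : ℤ) (x y : (Fin 2 → ℤ) × E) :
    orthSum (polar ((hyperbolicPlane ℤ).prod q)) (rankOneForm (-(2 * d)))
        (complementMap E a b c x) (complementMap E a b c y) =
      orthSum (bilin ((2 : ℤ) • !![-a, c; c, -(d * b ^ 2)])) (polar q) x y := by
  simp only [orthSum, complementMap, AddMonoidHom.coe_mk, ZeroHom.coe_mk, polar_prod,
    polar_hyperbolicPlane, rankOneForm, bilin, Matrix.smul_apply, of_apply, cons_val',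
    cons_val_fin_one, smul_eq_mul, Fin.sum_univ_two, cons_val_zero, cons_val_one]
  ring

lemma orthSum_normalForm (q : QuadraticForm ℤ E) (a b c d : ℤ) (x : ((ℤ × ℤ) × E) × ℤ) :
    orthSum (polar ((hyperbolicPlane ℤ).prod q)) (rankOneForm (-(2 * d))) x
        (d • b • ((a, 1), 0), c) =
      d * (b * (x.1.1.1 + a * x.1.1.2) - 2 * c * x.2) := by
  simp only [orthSum, Prod.smul_mk, smul_eq_mul, mul_one, smul_zero, polar_prod,
    polar_hyperbolicPlane, polar_zero_right, add_zero, rankOneForm]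
  ring

end Complement

section DivisorVector

open QuadraticMap Matrix

variable {ι E : Type} [Fintype ι] [AddCommGroup E] {q : QuadraticForm ℤ E}
  {G : Matrix ι ι ℤ} {r : ι → ℤ} {d k : ℤ}

lemma exists_smul_of_dvd_bilin (hq : IsUnimodular q) (e : (ι → ℤ) ≃+ E × ℤ)
    (he : ∀ x y, orthSum (polar q) (rankOneForm k) (e x) (e y) = bilin G x y)
    (hdvd : ∀ l, d ∣ bilin G r l) : ∃ w, (e r).1 = d • w := by
  refine hq d (e r).1 fun y => ?_
  have := hdvd (e.symm (y, 0))
  rw [← he, e.apply_symm_apply] at this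
  simpa [orthSum, rankOneForm, polar_comm] using this

lemma exists_addEquiv_normalForm (hq : IsUnimodular q)
    (hG : LatIsometric (bilin G)
      (orthSum (polar ((hyperbolicPlane ℤ).prod ((hyperbolicPlane ℤ).prod q))) (rankOneForm k)))
    (hdvd : ∀ l, d ∣ bilin G r l) :
    ∃ (e : (ι → ℤ) ≃+ ((ℤ × ℤ) × (ℤ × ℤ) × E) × ℤ) (a b c : ℤ),
      (∀ x y, orthSum (polar ((hyperbolicPlane ℤ).prod ((hyperbolicPlane ℤ).prod q)))
        (rankOneForm k) (e x) (e y) = bilin G x y) ∧ e r = (d • b • ((a, 1), 0), c) := by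
  obtain ⟨e, he⟩ := hG
  have hunimodular : IsUnimodular ((hyperbolicPlane ℤ).prod ((hyperbolicPlane ℤ).prod q)) :=
    isUnimodular_hyperbolicPlane.prod (isUnimodular_hyperbolicPlane.prod hq)
  obtain ⟨w, hw⟩ := exists_smul_of_dvd_bilin hunimodular e.toAddEquiv he hdvd
  obtain ⟨a, b, g, hg⟩ := hq.exists_sameOrbit_smul w
  refine ⟨e.toAddEquiv.trans (g.toLinearEquiv.toAddEquiv.prodCongr (.refl ℤ)), a, b, (e r).2,
    fun x y => ?_, Prod.ext ?_ rfl⟩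
  · rw [← he x y]
    exact congrArg (· + _) (polar_isometryEquiv_apply g _ _)
  · change g (e r).1 = _
    rw [show (e r).1 = d • w from hw, map_zsmul, hg]

theorem exists_latIsometric_orthC (hq : IsUnimodular q)
    (hG : LatIsometric (bilin G) (orthSum
      (polar ((hyperbolicPlane ℤ).prod ((hyperbolicPlane ℤ).prod q))) (rankOneForm (-(2 * d)))))
    (hr : bilin G r r = -(2 * d)) (hdiv : IsDivisorOf G r d) :
    ∃ B : Matrix (Fin 2) (Fin 2) ℤ, B.IsSymm ∧ B.det = -1 ∧
      LatIsometric (fun x y : ↥(orthC G r) => bilin G (x : ι → ℤ) (y : ι → ℤ))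
        (orthSum (bilin ((2 : ℤ) • B)) (polar ((hyperbolicPlane ℤ).prod q))) := by
  obtain ⟨hd, hdvd, l, hl⟩ := hdiv
  obtain ⟨e, a, b, c, he, her⟩ := exists_addEquiv_normalForm hq hG hdvd
  have hpair (x : ι → ℤ) :
      bilin G x r = d * (b * ((e x).1.1.1 + a * (e x).1.1.2) - 2 * c * (e x).2) := by
    rw [← he, her, orthSum_normalForm]
  have hcomm (x y : ι → ℤ) : bilin G x y = bilin G y x := by
    rw [← he x y, ← he y x, orthSum, orthSum, polar_comm, rankOneForm, rankOneForm, mul_right_comm]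
  have hdet : a * (d * b ^ 2) - c ^ 2 = -1 := by
    rw [hpair, her] at hr
    simp only [Prod.smul_mk, smul_eq_mul, mul_one] at hr
    refine mul_left_cancel₀ (mul_ne_zero two_ne_zero hd.ne') ?_
    linear_combination hr
  have hcop : IsCoprime b (2 * c) := by
    refine ⟨(e l).1.1.1 + a * (e l).1.1.2, -(e l).2, mul_left_cancel₀ hd.ne' ?_⟩
    rw [hcomm, hpair] at hl
    linear_combination hl
  have hb : b ≠ 0 := by
    rintro rfl
    have htwo : IsUnit (2 : ℤ) := isUnit_of_mul_isUnit_left (isCoprime_zero_left.mp hcop)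
    exact Int.prime_two.not_isUnit htwo
  refine ⟨!![-a, c; c, -(d * b ^ 2)], ?_, ?_, ?_⟩
  · exact .ext (by simp [Fin.forall_fin_two])
  · rw [det_fin_two_of]
    linear_combination hdet
  · refine latIsometric_orthC e he (complementMap _ a b c) (complementMap_injective hb)
      (fun x => ?_) (orthSum_complementMap _ a b c d)
    rw [her, orthSum_normalForm, mem_range_complementMap hb hcop, mul_eq_zero_iff_left hd.ne',
      sub_eq_zero]

end DivisorVector

section GeneralTheorem

open QuadraticMap Matrix

variable {ι : Type} [Fintype ι]

/-- The Gram matrix of `2U ⊕ E ⊕ ⟨−2d⟩`, where `E` has Gram matrix `A`. -/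
def gramLOf (A : Matrix ι ι ℤ) (d : ℤ) :
    Matrix (((Fin 2 ⊕ Fin 2) ⊕ ι) ⊕ Fin 1) (((Fin 2 ⊕ Fin 2) ⊕ ι) ⊕ Fin 1) ℤ :=
  fromBlocks (fromBlocks (fromBlocks gramU 0 0 gramU) 0 0 A) 0 0 !![-(2 * d)]

/-- The Gram matrix of `U ⊕ E ⊕ ⟨2⟩ ⊕ ⟨−2⟩`, where `E` has Gram matrix `A`. -/
def gramK2Of (A : Matrix ι ι ℤ) :
    Matrix (((Fin 2 ⊕ ι) ⊕ Fin 1) ⊕ Fin 1) (((Fin 2 ⊕ ι) ⊕ Fin 1) ⊕ Fin 1) ℤ :=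
  fromBlocks (fromBlocks (fromBlocks gramU 0 0 A) 0 0 !![2]) 0 0 !![-2]

/-- The Gram matrix of `U ⊕ U(2) ⊕ E`, where `E` has Gram matrix `A`. -/
def gramTOf (A : Matrix ι ι ℤ) : Matrix ((Fin 2 ⊕ Fin 2) ⊕ ι) ((Fin 2 ⊕ Fin 2) ⊕ ι) ℤ :=
  fromBlocks (fromBlocks gramU 0 0 gramU2) 0 0 A

open LatIsometric

lemma latIsometric_gramLOf {A : Matrix ι ι ℤ} {q : QuadraticForm ℤ (ι → ℤ)}
    (hA : LatIsometric (bilin A) (polar q)) (d : ℤ) :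
    LatIsometric (bilin (gramLOf A d))
      (orthSum (polar ((hyperbolicPlane ℤ).prod ((hyperbolicPlane ℤ).prod q)))
        (rankOneForm (-(2 * d)))) := by
  refine (bilin_fromBlocks _ _).trans (orthSum_congr ?_ (bilin_rankOne _))
  have hUU := (bilin_fromBlocks _ A).trans (orthSum_congr (bilin_fromBlocks gramU gramU) (refl _))
  exact (hUU.trans (orthSum_assoc _ _ _)).trans (orthSum_gramU (orthSum_gramU hA))

lemma latIsometric_gramTOf (A : Matrix ι ι ℤ) :
    LatIsometric (orthSum (bilin ((2 : ℤ) • gramU)) (orthSum (bilin gramU) (bilin A)))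
      (bilin (gramTOf A)) := by
  rw [show (2 : ℤ) • gramU = gramU2 by simp [gramU, gramU2]]
  refine (orthSum_assoc _ _ _).symm.trans ?_
  refine (orthSum_congr ((orthSum_comm _ _).trans (bilin_fromBlocks _ _).symm) (refl _)).trans ?_
  exact (bilin_fromBlocks _ _).symm

lemma latIsometric_gramK2Of (A : Matrix ι ι ℤ) :
    LatIsometric (orthSum (bilin ((2 : ℤ) • !![1, 0; 0, -1])) (orthSum (bilin gramU) (bilin A)))
      (bilin (gramK2Of A)) := by
  have hdiag : LatIsometric (bilin ((2 : ℤ) • !![1, 0; 0, -1]))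
      (orthSum (bilin !![2]) (bilin !![-2])) := by
    rw [show (2 : ℤ) • !![(1 : ℤ), 0; 0, -1] = !![2, 0; 0, -2] by simp]
    exact (bilin_diagonal 2 (-2)).trans
      (orthSum_congr (bilin_rankOne 2).symm (bilin_rankOne (-2)).symm)
  have hswap := (orthSum_congr hdiag (bilin_fromBlocks gramU A).symm).trans (orthSum_comm _ _)
  refine (hswap.trans (orthSum_assoc _ _ _).symm).trans ?_
  exact (orthSum_congr (bilin_fromBlocks _ _).symm (refl _)).trans (bilin_fromBlocks _ _).symm

theorem orthogonal_complement_divisor_d_general [DecidableEq ι] {A : Matrix ι ι ℤ}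
    (hsymm : A.IsSymm) (heven : ∀ i, Even (A i i)) (hdet : IsUnit A.det) {d : ℤ}
    {r : ((Fin 2 ⊕ Fin 2) ⊕ ι) ⊕ Fin 1 → ℤ} (hr : bilin (gramLOf A d) r r = -(2 * d))
    (hdiv : IsDivisorOf (gramLOf A d) r d) :
    LatIsometric
      (fun x y : ↥(orthC (gramLOf A d) r) =>
        bilin (gramLOf A d) (x : ((Fin 2 ⊕ Fin 2) ⊕ ι) ⊕ Fin 1 → ℤ) y)
      (bilin (gramK2Of A)) ∨
    LatIsometric
      (fun x y : ↥(orthC (gramLOf A d) r) =>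
        bilin (gramLOf A d) (x : ((Fin 2 ⊕ Fin 2) ⊕ ι) ⊕ Fin 1 → ℤ) y)
      (bilin (gramTOf A)) := by
  obtain ⟨q, hpolar⟩ := exists_polar_eq_of_even (B := toBilin' A)
    (isSymm_toBilin'_iff_isSymm.mpr hsymm)
    fun x => by rw [toBilin'_apply]; exact even_bilin_self hsymm heven x
  have hq (x y : ι → ℤ) : polar q x y = bilin A x y := (hpolar x y).trans (toBilin'_apply A x y)
  have hA : LatIsometric (bilin A) (polar q) := ⟨.refl ℤ _, hq⟩
  obtain ⟨B, hB, hBdet, hK⟩ := exists_latIsometric_orthC (isUnimodular_of_polar_eq_bilin hdet hq)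
    (latIsometric_gramLOf hA d) hr hdiv
  have hUA := (orthSum_gramU hA).symm
  rcases latIsometric_gramU_or_diagonal hB hBdet with hU | hdiag
  · exact .inr ((hK.trans (orthSum_congr (hU.bilin_smul 2) hUA)).trans (latIsometric_gramTOf A))
  · exact .inl ((hK.trans (orthSum_congr (hdiag.bilin_smul 2) hUA)).trans
      (latIsometric_gramK2Of A))

end GeneralTheorem

section E8

open Matrix Kronecker

lemma gramE8copies_eq_kronecker (m : ℕ) :
    gramE8copies m = (1 : Matrix (Fin m) (Fin m) ℤ) ⊗ₖ gramE8neg := by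
  ext p q
  simp [gramE8copies, kroneckerMap_apply, one_apply]

lemma isSymm_gramE8neg : gramE8neg.IsSymm := CartanMatrix.E₈_isSymm.neg

lemma isSymm_gramE8copies (m : ℕ) : (gramE8copies m).IsSymm := by
  rw [gramE8copies_eq_kronecker, IsSymm, ← kroneckerMap_transpose, transpose_one,
    isSymm_gramE8neg.eq]

lemma even_gramE8copies_diag (m : ℕ) (p : Fin m × Fin 8) : Even (gramE8copies m p p) := by
  simp [gramE8copies, gramE8neg, CartanMatrix.E₈_diag]

lemma isUnit_det_gramE8copies (m : ℕ) : IsUnit (gramE8copies m).det := by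
  rw [gramE8copies_eq_kronecker, det_kronecker]
  simp [gramE8neg, det_neg, CartanMatrix.E₈_det]

end E8

/-- Let `r` be a primitive vector in `L = L_{2d}^{(m)}` with
`(r,r) = −2d` and `div(r) = d`.  Then the orthogonal complement `K_r`, with the
restricted form, is isometric either to `K_2^{(m)} = U ⊕ mE₈(−1) ⊕ ⟨2⟩ ⊕ ⟨−2⟩` or to
`T_{2,8m+2} = U ⊕ U(2) ⊕ mE₈(−1)`. -/
theorem orthogonal_complement_divisor_d
    (m d : ℕ) (hd : 1 ≤ d) (r : IdxL m → ℤ) (hprim : IsPrim r)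
    (hr : bilin (gramL m d) r r = -(2 * (d : ℤ)))
    (hdiv : IsDivisorOf (gramL m d) r (d : ℤ)) :
    LatIsometric
      (fun x y : ↥(orthC (gramL m d) r) =>
        bilin (gramL m d) (x : IdxL m → ℤ) (y : IdxL m → ℤ))
      (bilin (gramK2 m)) ∨
    LatIsometric
      (fun x y : ↥(orthC (gramL m d) r) =>
        bilin (gramL m d) (x : IdxL m → ℤ) (y : IdxL m → ℤ))
      (bilin (gramT m)) := by
  exact orthogonal_complement_divisor_d_general (isSymm_gramE8copies m)
    (even_gramE8copies_diag m) (isUnit_det_gramE8copies m) hr hdiv
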